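/- Let R be an associative unital ring and let ℰ be an exact structure on the category Mod R of right R-modules such that Mod R has enough ℰ-projectives and enough ℰ-injectives and ℰ contains all pure exact sequences. If 𝒳 is a class of pure projective right R-modules, then the class 𝒳^⊥ = {N : every conflation 0 → N → Z → X → 0 with X ∈ 𝒳 splits} is preenveloping: every right R-module admits an 𝒳^⊥-preenvelope. -/

import Mathlib

open CategoryTheory Category Limits

universe v u

namespace ExactPaper

variable {𝒜 : Type u} [Category.{v} 𝒜] [Abelian 𝒜]

/-- A morphism is an admissible monic w.r.t. a class `c` of short complexes if it occurs
as the first map of a member of `c`. -/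
def AdmMono (c : ShortComplex 𝒜 → Prop) {X Y : 𝒜} (f : X ⟶ Y) : Prop :=
  ∃ (Z : 𝒜) (g : Y ⟶ Z) (w : f ≫ g = 0), c (ShortComplex.mk f g w)

/-- A morphism is an admissible epic w.r.t. a class `c` of short complexes if it occurs
as the second map of a member of `c`. -/
def AdmEpi (c : ShortComplex 𝒜 → Prop) {Y Z : 𝒜} (g : Y ⟶ Z) : Prop :=
  ∃ (X : 𝒜) (f : X ⟶ Y) (w : f ≫ g = 0), c (ShortComplex.mk f g w)

/-- A (Quillen) exact structure on an abelian category `𝒜`: a class of short exact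
sequences, called conflations, closed under isomorphisms, containing all split short
exact sequences, such that admissible monics and epics are closed under composition,
pushouts of admissible monics along arbitrary morphisms are admissible monics and
pullbacks of admissible epics along arbitrary morphisms are admissible epics. -/
structure ExactStructure (𝒜 : Type u) [Category.{v} 𝒜] [Abelian 𝒜] where
  conflation : ShortComplex 𝒜 → Prop
  shortExact_of_conflation : ∀ (S : ShortComplex 𝒜), conflation S → S.ShortExact
  conflation_of_iso : ∀ (S T : ShortComplex 𝒜), (S ≅ T) → conflation S → conflation T
  conflation_of_splitting : ∀ (S : ShortComplex 𝒜), S.Splitting → conflation S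
  admMono_comp : ∀ {X Y Z : 𝒜} (f : X ⟶ Y) (g : Y ⟶ Z),
    AdmMono conflation f → AdmMono conflation g → AdmMono conflation (f ≫ g)
  admEpi_comp : ∀ {X Y Z : 𝒜} (f : X ⟶ Y) (g : Y ⟶ Z),
    AdmEpi conflation f → AdmEpi conflation g → AdmEpi conflation (f ≫ g)
  admMono_pushout : ∀ {L M M' : 𝒜} (i : L ⟶ M) (f : L ⟶ M'),
    AdmMono conflation i → AdmMono conflation (pushout.inr i f)
  admEpi_pullback : ∀ {M N M' : 𝒜} (p : M ⟶ N) (g : M' ⟶ N),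
    AdmEpi conflation p → AdmEpi conflation (pullback.snd p g)

namespace ExactStructure

variable (E : ExactStructure 𝒜)

/-- An `ℰ`-projective object. -/
def EProjective (P : 𝒜) : Prop :=
  ∀ (S : ShortComplex 𝒜), E.conflation S → ∀ h : P ⟶ S.X₃, ∃ k : P ⟶ S.X₂, k ≫ S.g = h

/-- An `ℰ`-injective object. -/
def EInjective (I : 𝒜) : Prop :=
  ∀ (S : ShortComplex 𝒜), E.conflation S → ∀ h : S.X₁ ⟶ I, ∃ k : S.X₂ ⟶ I, S.f ≫ k = h

/-- `𝒜` has enough `ℰ`-projectives. -/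
def EnoughProjectives : Prop :=
  ∀ M : 𝒜, ∃ (K P : 𝒜) (i : K ⟶ P) (p : P ⟶ M) (w : i ≫ p = 0),
    E.conflation (ShortComplex.mk i p w) ∧ E.EProjective P

/-- `𝒜` has enough `ℰ`-injectives. -/
def EnoughInjectives : Prop :=
  ∀ M : 𝒜, ∃ (I C : 𝒜) (i : M ⟶ I) (p : I ⟶ C) (w : i ≫ p = 0),
    E.conflation (ShortComplex.mk i p w) ∧ E.EInjective I

/-- `Ext¹_ℰ(M,N) = 0`: every conflation `0 → N → Z → M → 0` splits. -/
def Ext1Zero (M N : 𝒜) : Prop :=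
  ∀ (Z : 𝒜) (i : N ⟶ Z) (p : Z ⟶ M) (w : i ≫ p = 0),
    E.conflation (ShortComplex.mk i p w) → ∃ r : Z ⟶ N, i ≫ r = 𝟙 N

/-- The right `ℰ`-orthogonal class `𝒳^⊥`. -/
def rightPerp (𝒳 : Set 𝒜) : Set 𝒜 := {N | ∀ X ∈ 𝒳, E.Ext1Zero X N}

/-- The left `ℰ`-orthogonal class `^⊥𝒴`. -/
def leftPerp (𝒴 : Set 𝒜) : Set 𝒜 := {M | ∀ Y ∈ 𝒴, E.Ext1Zero M Y}

/-- A class is closed under `ℰ`-extensions. -/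
def ClosedUnderExtensions (𝒯 : Set 𝒜) : Prop :=
  ∀ S : ShortComplex 𝒜, E.conflation S → S.X₁ ∈ 𝒯 → S.X₃ ∈ 𝒯 → S.X₂ ∈ 𝒯

/-- An `ℰ`-resolving class. -/
def Resolving (𝒯 : Set 𝒜) : Prop :=
  (∀ P : 𝒜, E.EProjective P → P ∈ 𝒯) ∧ E.ClosedUnderExtensions 𝒯 ∧
    ∀ S : ShortComplex 𝒜, E.conflation S → S.X₂ ∈ 𝒯 → S.X₃ ∈ 𝒯 → S.X₁ ∈ 𝒯

/-- An `ℰ`-coresolving class. -/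
def Coresolving (𝒯 : Set 𝒜) : Prop :=
  (∀ I : 𝒜, E.EInjective I → I ∈ 𝒯) ∧ E.ClosedUnderExtensions 𝒯 ∧
    ∀ S : ShortComplex 𝒜, E.conflation S → S.X₁ ∈ 𝒯 → S.X₂ ∈ 𝒯 → S.X₃ ∈ 𝒯

/-- `(𝒳,𝒴)` is a complete hereditary `ℰ`-cotorsion pair. -/
def CompleteHereditaryCotorsionPair (𝒳 𝒴 : Set 𝒜) : Prop :=
  𝒳 = E.leftPerp 𝒴 ∧ 𝒴 = E.rightPerp 𝒳 ∧
  (∀ A : 𝒜, ∃ (Y X : 𝒜) (i : Y ⟶ X) (p : X ⟶ A) (w : i ≫ p = 0),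
      E.conflation (ShortComplex.mk i p w) ∧ X ∈ 𝒳 ∧ Y ∈ 𝒴) ∧
  (∀ A : 𝒜, ∃ (Y' X' : 𝒜) (i : A ⟶ Y') (p : Y' ⟶ X') (w : i ≫ p = 0),
      E.conflation (ShortComplex.mk i p w) ∧ X' ∈ 𝒳 ∧ Y' ∈ 𝒴) ∧
  E.Resolving 𝒳

end ExactStructure

/-- `f : X ⟶ A` is an `𝒳`-precover of `A`. -/
def IsPrecover (𝒳 : Set 𝒜) {X A : 𝒜} (f : X ⟶ A) : Prop :=
  X ∈ 𝒳 ∧ ∀ X' : 𝒜, X' ∈ 𝒳 → ∀ g : X' ⟶ A, ∃ h : X' ⟶ X, h ≫ f = g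

/-- `f : X ⟶ A` is an `𝒳`-cover of `A`. -/
def IsCover (𝒳 : Set 𝒜) {X A : 𝒜} (f : X ⟶ A) : Prop :=
  IsPrecover 𝒳 f ∧ ∀ h : X ⟶ X, h ≫ f = f → IsIso h

/-- `f : A ⟶ Y` is a `𝒴`-preenvelope of `A`. -/
def IsPreenvelope (𝒴 : Set 𝒜) {A Y : 𝒜} (f : A ⟶ Y) : Prop :=
  Y ∈ 𝒴 ∧ ∀ Y' : 𝒜, Y' ∈ 𝒴 → ∀ g : A ⟶ Y', ∃ h : Y ⟶ Y', f ≫ h = g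

/-- `f : A ⟶ Y` is a `𝒴`-envelope of `A`. -/
def IsEnvelope (𝒴 : Set 𝒜) {A Y : 𝒜} (f : A ⟶ Y) : Prop :=
  IsPreenvelope 𝒴 f ∧ ∀ h : Y ⟶ Y, f ≫ h = f → IsIso h

/-- A class of objects closed under isomorphisms. -/
def ClosedUnderIsos (𝒳 : Set 𝒜) : Prop := ∀ X Y : 𝒜, (X ≅ Y) → X ∈ 𝒳 → Y ∈ 𝒳

/-- A class of objects closed under direct summands. -/
def ClosedUnderDirectSummands (𝒳 : Set 𝒜) : Prop :=
  ∀ X Y : 𝒜, (∃ (s : Y ⟶ X) (r : X ⟶ Y), s ≫ r = 𝟙 Y) → X ∈ 𝒳 → Y ∈ 𝒳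

end ExactPaper

namespace ExactPaper

open CategoryTheory Limits

variable {R : Type u} [Ring R]

/-- A pure exact sequence of right `R`-modules (i.e. of `Rᵐᵒᵖ`-modules): a short exact
sequence which stays exact after applying `Hom_R(F, −)` for every finitely presented
right `R`-module `F`. -/
def PureSES (S : ShortComplex (ModuleCat.{u} Rᵐᵒᵖ)) : Prop :=
  S.ShortExact ∧ ∀ F : ModuleCat.{u} Rᵐᵒᵖ, Module.FinitePresentation Rᵐᵒᵖ F →
    ∀ h : F ⟶ S.X₃, ∃ k : F ⟶ S.X₂, k ≫ S.g = h

/-- A pure projective right `R`-module: projective with respect to pure exact sequences. -/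
def PureProjective (P : ModuleCat.{u} Rᵐᵒᵖ) : Prop :=
  ∀ S : ShortComplex (ModuleCat.{u} Rᵐᵒᵖ), PureSES S →
    ∀ h : P ⟶ S.X₃, ∃ k : P ⟶ S.X₂, k ≫ S.g = h

/-- A pure injective right `R`-module: injective with respect to pure exact sequences. -/
def PureInjective (I : ModuleCat.{u} Rᵐᵒᵖ) : Prop :=
  ∀ S : ShortComplex (ModuleCat.{u} Rᵐᵒᵖ), PureSES S →
    ∀ h : S.X₁ ⟶ I, ∃ k : S.X₂ ⟶ I, S.f ≫ k = h

end ExactPaper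

/-!
Every class of modules closed under products and pure submodules is preenveloping (Rada–Saorín).
Purity of `N ⊆ Y` means that finite linear systems over `N` solvable in `Y` are solvable in `N`.
Fixing a solution in `Y` of each solvable system, the values of formal terms over `A` sweep out a
pure submodule through which a given `A → Y` factors, and it is a quotient of a free module that
depends only on `A`. So only a set of maps out of `A` matters, and their product is a preenvelope.

For pure projective `X`, the condition `Ext¹_ℰ(X, N) = 0` passes to products and to pure
submodules `N ⊆ Y`: extend `N → Y` over a conflation `N → Z → X`, lift the induced map `X → Y/N`
to `Y`, and subtract.
-/

namespace ExactPaper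

section Preenvelopes

variable {𝒜 : Type u} [Category.{v} 𝒜]

/-- Closure of a class of objects under products indexed by types in the universe of morphisms. -/
def ClosedUnderProducts [HasProducts.{v} 𝒜] (𝒴 : Set 𝒜) : Prop :=
  ∀ ⦃I : Type v⦄ (Y : I → 𝒜), (∀ i, Y i ∈ 𝒴) → ∏ᶜ Y ∈ 𝒴

theorem isPreenvelope_piLift {𝒴 : Set 𝒜} {A : 𝒜} {I : Type*} {Y : I → 𝒜} [HasProduct Y]
    (hY : ∏ᶜ Y ∈ 𝒴) (f : ∀ i, A ⟶ Y i)
    (hf : ∀ Y' ∈ 𝒴, ∀ g : A ⟶ Y', ∃ (i : I) (h : Y i ⟶ Y'), f i ≫ h = g) :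
    IsPreenvelope 𝒴 (Pi.lift f) := by
  refine ⟨hY, fun Y' hY' g ↦ ?_⟩
  obtain ⟨i, h, rfl⟩ := hf Y' hY' g
  exact ⟨Pi.π Y i ≫ h, by simp⟩

end Preenvelopes

section Abelian

variable {𝒜 : Type u} [Category.{v} 𝒜] [Abelian 𝒜]

theorem shortExact_pushout {S : ShortComplex 𝒜} (hS : S.ShortExact) {N : 𝒜} (f : S.X₁ ⟶ N) :
    (ShortComplex.mk (pushout.inr S.f f) (pushout.desc S.g 0 (by simp))
      (pushout.inr_desc _ _ _)).ShortExact := by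
  have := hS.mono_f
  have := hS.epi_g
  have : Epi (pushout.desc S.g (0 : N ⟶ S.X₃) (by simp) : pushout S.f f ⟶ S.X₃) :=
    epi_of_epi_fac (pushout.inl_desc _ _ _)
  have inl_comp_eq_zero {T : 𝒜} (k : pushout S.f f ⟶ T) (hk : pushout.inr S.f f ≫ k = 0) :
      S.f ≫ pushout.inl S.f f ≫ k = 0 := by
    rw [pushout.condition_assoc, hk, comp_zero]
  refine ⟨ShortComplex.exact_of_g_is_cokernel _ (CokernelCofork.IsColimit.ofπ' _ _ fun k hk ↦
    ⟨hS.exact.desc _ (inl_comp_eq_zero k hk), ?_⟩)⟩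
  apply pushout.hom_ext
  · rw [pushout.inl_desc_assoc, hS.exact.g_desc]
  · rw [pushout.inr_desc_assoc, zero_comp, hk]

namespace ExactStructure

variable {E : ExactStructure 𝒜}

theorem conflation_of_admMono {S : ShortComplex 𝒜} (hS : S.ShortExact)
    (hf : AdmMono E.conflation S.f) : E.conflation S := by
  obtain ⟨Z, g, w, hg⟩ := hf
  have hT := E.shortExact_of_conflation _ hg
  have := hS.epi_g
  have := hT.epi_g
  let e : Z ≅ S.X₃ := hT.exact.gIsCokernel.coconePointUniqueUpToIso hS.exact.gIsCokernel
  have he : g ≫ e.hom = S.g :=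
    hT.exact.gIsCokernel.comp_coconePointUniqueUpToIso_hom _ WalkingParallelPair.one
  exact E.conflation_of_iso (ShortComplex.mk S.f g w) S
    (ShortComplex.isoMk (Iso.refl _) (Iso.refl _) e (by simp) (by simp [he])) hg

theorem conflation_pushout {S : ShortComplex 𝒜} (hS : E.conflation S) {N : 𝒜} (f : S.X₁ ⟶ N) :
    E.conflation (ShortComplex.mk (pushout.inr S.f f) (pushout.desc S.g 0 (by simp))
      (pushout.inr_desc _ _ _)) :=
  conflation_of_admMono (shortExact_pushout (E.shortExact_of_conflation S hS) f)
    (E.admMono_pushout S.f f ⟨S.X₃, S.g, S.zero, hS⟩)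

theorem Ext1Zero.exists_extension {S : ShortComplex 𝒜} {N : 𝒜} (hN : E.Ext1Zero S.X₃ N)
    (hS : E.conflation S) (f : S.X₁ ⟶ N) : ∃ s : S.X₂ ⟶ N, S.f ≫ s = f := by
  obtain ⟨r, hr⟩ := hN _ _ _ _ (conflation_pushout hS f)
  exact ⟨pushout.inl S.f f ≫ r, by rw [pushout.condition_assoc, hr, comp_id]⟩

theorem Ext1Zero.pi {X : 𝒜} {I : Type*} {N : I → 𝒜} [HasProduct N]
    (hN : ∀ i, E.Ext1Zero X (N i)) : E.Ext1Zero X (∏ᶜ N) := by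
  intro Z f p w hc
  choose s hs using fun i ↦ (hN i).exists_extension hc (Pi.π N i)
  exact ⟨Pi.lift s, Pi.hom_ext _ _ fun i ↦ by simpa using hs i⟩

theorem Ext1Zero.of_shortExact {X : 𝒜} {S : ShortComplex 𝒜} (hS : S.ShortExact)
    (hlift : ∀ h : X ⟶ S.X₃, ∃ k : X ⟶ S.X₂, k ≫ S.g = h) (hX : E.Ext1Zero X S.X₂) :
    E.Ext1Zero X S.X₁ := by
  intro Z i p w hc
  have hZ := E.shortExact_of_conflation _ hc
  have : Epi p := hZ.epi_g
  have := hS.mono_f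
  obtain ⟨s, hs : i ≫ s = S.f⟩ := hX.exists_extension hc S.f
  obtain ⟨h, hh : p ≫ h = s ≫ S.g⟩ : ∃ h : X ⟶ S.X₃, p ≫ h = s ≫ S.g :=
    ⟨_, hZ.exact.g_desc (s ≫ S.g) (by simp [reassoc_of% hs])⟩
  obtain ⟨t, rfl⟩ := hlift h
  have hst : (s - p ≫ t) ≫ S.g = 0 := by simp [hh]
  refine ⟨hS.exact.lift (s - p ≫ t) hst, ?_⟩
  rw [← cancel_mono S.f, assoc, hS.exact.lift_f, Preadditive.comp_sub, hs, reassoc_of% w]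
  simp

end ExactStructure

end Abelian

section Purity

variable {S : Type*} [Ring S] {M : Type*} [AddCommGroup M] [Module S M]

/-- The left-hand sides `∑ j, C i j • x j` of the linear system with coefficient matrix `C`. It is
only a function of `x`, since it need not be `S`-linear when `S` is not commutative. -/
def linearSystem {m n : ℕ} (C : Matrix (Fin m) (Fin n) S) (x : Fin n → M) : Fin m → M :=
  fun i ↦ ∑ j, C i j • x j

/-- Equational purity: a finite linear system with constants in `N` has a solution in `N` as soon
as it has one in the ambient module. -/
def IsPureSubmodule (N : Submodule S M) : Prop :=
  ∀ ⦃m n : ℕ⦄ (C : Matrix (Fin m) (Fin n) S) (y : Fin n → M), (∀ i, linearSystem C y i ∈ N) →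
    ∃ x : Fin n → M, (∀ j, x j ∈ N) ∧ linearSystem C x = linearSystem C y

theorem exists_comp_eq_of_comp_eq_zero {F G H : Type*} [AddCommGroup F] [Module S F]
    [AddCommGroup G] [Module S G] [AddCommGroup H] [Module S H] {g : H →ₗ[S] G} {f : G →ₗ[S] F}
    (hgf : Function.Exact g f) (hf : Function.Surjective f) (φ : G →ₗ[S] M) (hφ : φ ∘ₗ g = 0) :
    ∃ k : F →ₗ[S] M, k ∘ₗ f = φ := by
  refine ⟨(LinearMap.range g).liftQ φ (LinearMap.range_le_ker_iff.2 hφ) ∘ₗ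
    (hgf.linearEquivOfSurjective hf).symm, ?_⟩
  ext v
  simp

theorem IsPureSubmodule.exists_lift {P F : Type*} [AddCommGroup P] [Module S P] [AddCommGroup F]
    [Module S F] [Module.FinitePresentation S F] {q : M →ₗ[S] P} (hq : Function.Surjective q)
    (hpure : IsPureSubmodule (LinearMap.ker q)) (h : F →ₗ[S] P) :
    ∃ k : F →ₗ[S] M, q ∘ₗ k = h := by
  obtain ⟨n, m, f, g, hf, hgf⟩ := Module.FinitePresentation.exists_fin' S F
  let C : Matrix (Fin m) (Fin n) S := fun i ↦ g (Pi.single i 1)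
  choose y hy using fun j ↦ hq (h (f (Pi.single j 1)))
  have q_comp_y : q ∘ₗ Fintype.linearCombination S y = h ∘ₗ f := by
    ext j
    simp [hy]
  have system_y_mem (i : Fin m) : linearSystem C y i ∈ LinearMap.ker q := by
    calc q (linearSystem C y i) = h (f (g (Pi.single i 1))) := LinearMap.congr_fun q_comp_y (C i)
      _ = 0 := by rw [hgf.apply_apply_eq_zero, map_zero]
  obtain ⟨x, hx, hxy⟩ := hpure C y system_y_mem
  have q_comp_x : q ∘ₗ Fintype.linearCombination S x = 0 := by
    ext j
    simpa using hx j
  have sub_comp_g :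
      (Fintype.linearCombination S y - Fintype.linearCombination S x) ∘ₗ g = 0 := by
    ext i
    exact sub_eq_zero.2 (congrFun hxy.symm i)
  obtain ⟨k, hk⟩ := exists_comp_eq_of_comp_eq_zero hgf hf _ sub_comp_g
  refine ⟨k, LinearMap.cancel_right hf |>.1 ?_⟩
  rw [LinearMap.comp_assoc, hk, LinearMap.comp_sub, q_comp_y, q_comp_x, sub_zero]

end Purity

section PureHull

universe w

/-- Formal terms over `A` in the language of `S`-modules with a symbol `sol C t j` for the `j`-th
coordinate of a solution of the linear system with coefficients `C` and constants `t`. -/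
inductive SystemTerm (S : Type u) (A : Type w) : Type (max u w)
  | var (a : A) : SystemTerm S A
  | zero : SystemTerm S A
  | add (s t : SystemTerm S A) : SystemTerm S A
  | smul (r : S) (t : SystemTerm S A) : SystemTerm S A
  | sol {m n : ℕ} (C : Matrix (Fin m) (Fin n) S) (t : Fin m → SystemTerm S A) (j : Fin n) :
      SystemTerm S A

variable {S : Type u} [Ring S] {A : Type w} {M : Type*} [AddCommGroup M] [Module S M]

/-- The value of a term in `M` under an assignment `g` of the variables. The value of `sol` is
arbitrary when the system it refers to is unsolvable. -/
noncomputable def SystemTerm.eval (g : A → M) : SystemTerm S A → M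
  | var a => g a
  | zero => 0
  | add s t => s.eval g + t.eval g
  | smul r t => r • t.eval g
  | sol C t j => Function.invFun (linearSystem C) (fun i ↦ (t i).eval g) j

variable (S) in
/-- The submodule of all values of terms: a pure submodule containing the range of `g`, of size
bounded in terms of `S` and `A` alone. -/
noncomputable def pureHull (g : A → M) : Submodule S M where
  carrier := Set.range (SystemTerm.eval (S := S) g)
  zero_mem' := ⟨.zero, rfl⟩
  add_mem' := by
    rintro _ _ ⟨s, rfl⟩ ⟨t, rfl⟩
    exact ⟨.add s t, rfl⟩
  smul_mem' := by
    rintro r _ ⟨t, rfl⟩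
    exact ⟨.smul r t, rfl⟩

theorem apply_mem_pureHull (g : A → M) (a : A) : g a ∈ pureHull S g :=
  ⟨.var a, rfl⟩

theorem isPureSubmodule_pureHull (g : A → M) : IsPureSubmodule (pureHull S g) := by
  intro m n C y hy
  choose t ht using hy
  refine ⟨fun j ↦ (SystemTerm.sol C t j).eval g, fun j ↦ ⟨_, rfl⟩, ?_⟩
  have solvable : ∃ x, linearSystem C x = fun i ↦ (t i).eval g := ⟨y, funext fun i ↦ (ht i).symm⟩
  exact (Function.invFun_eq solvable).trans (funext ht)

theorem range_linearCombination_eval (g : A → M) :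
    LinearMap.range (Finsupp.linearCombination S (SystemTerm.eval (S := S) g)) = pureHull S g := by
  rw [Finsupp.range_linearCombination]
  exact (pureHull S g).span_eq

theorem exists_factorization_isPureSubmodule_range [AddCommGroup A] [Module S A] (g : A →ₗ[S] M) :
    ∃ (K : Submodule S (SystemTerm S A →₀ S)) (f : A →ₗ[S] (SystemTerm S A →₀ S) ⧸ K)
      (i : ((SystemTerm S A →₀ S) ⧸ K) →ₗ[S] M), Function.Injective i ∧
        IsPureSubmodule (LinearMap.range i) ∧ i ∘ₗ f = g := by
  let φ := Finsupp.linearCombination S (SystemTerm.eval (S := S) g)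
  have range_φ : LinearMap.range φ = pureHull S g := range_linearCombination_eval g
  have g_mem (a : A) : g a ∈ LinearMap.range φ := range_φ ▸ apply_mem_pureHull g a
  refine ⟨LinearMap.ker φ, φ.quotKerEquivRange.symm ∘ₗ g.codRestrict _ g_mem,
    (LinearMap.ker φ).liftQ φ le_rfl, LinearMap.ker_eq_bot.1 (Submodule.ker_liftQ_eq_bot' _ _ rfl),
    ?_, ?_⟩
  · rw [Submodule.range_liftQ, range_φ]
    exact isPureSubmodule_pureHull g
  · ext a
    exact congrArg Subtype.val (φ.quotKerEquivRange.apply_symm_apply (g.codRestrict _ g_mem a))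

end PureHull

section Modules

variable {R : Type u} [Ring R]

/-- Closure of a class of right modules under pure submodules, stated for the first terms of pure
exact sequences so that it entails closure under isomorphisms. -/
def ClosedUnderPureSubmodules (𝒴 : Set (ModuleCat.{u} Rᵐᵒᵖ)) : Prop :=
  ∀ S : ShortComplex (ModuleCat.{u} Rᵐᵒᵖ), PureSES S → S.X₂ ∈ 𝒴 → S.X₁ ∈ 𝒴

theorem pureSES_of_isPureSubmodule_range {S : ShortComplex (ModuleCat.{u} Rᵐᵒᵖ)}
    (hS : S.ShortExact) (hpure : IsPureSubmodule (LinearMap.range S.f.hom)) : PureSES S := by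
  refine ⟨hS, fun F _ h ↦ ?_⟩
  rw [hS.exact.moduleCat_range_eq_ker] at hpure
  obtain ⟨k, hk⟩ := hpure.exists_lift hS.moduleCat_surjective_g h.hom
  exact ⟨ModuleCat.ofHom k, ModuleCat.hom_ext hk⟩

theorem ClosedUnderPureSubmodules.mem_of_injective {𝒴 : Set (ModuleCat.{u} Rᵐᵒᵖ)}
    (h𝒴 : ClosedUnderPureSubmodules 𝒴) {N Y : ModuleCat.{u} Rᵐᵒᵖ} (hY : Y ∈ 𝒴)
    (i : N →ₗ[Rᵐᵒᵖ] Y) (hi : Function.Injective i) (hpure : IsPureSubmodule (LinearMap.range i)) :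
    N ∈ 𝒴 := by
  let S := ModuleCat.shortComplexOfCompEqZero i (LinearMap.range i).mkQ (LinearMap.range_mkQ_comp i)
  have hS : S.ShortExact := ModuleCat.shortComplex_shortExact S
    (LinearMap.exact_map_mkQ_range i) hi (Submodule.mkQ_surjective _)
  exact h𝒴 S (pureSES_of_isPureSubmodule_range hS hpure) hY

theorem exists_isPreenvelope_of_closedUnderPureSubmodules {𝒴 : Set (ModuleCat.{u} Rᵐᵒᵖ)}
    (hprod : ClosedUnderProducts 𝒴) (hpure : ClosedUnderPureSubmodules 𝒴)
    (A : ModuleCat.{u} Rᵐᵒᵖ) : ∃ (Y : ModuleCat.{u} Rᵐᵒᵖ) (j : A ⟶ Y), IsPreenvelope 𝒴 j := by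
  let T := SystemTerm Rᵐᵒᵖ A →₀ Rᵐᵒᵖ
  let I : Type u := Σ K : {K : Submodule Rᵐᵒᵖ T // ModuleCat.of Rᵐᵒᵖ (T ⧸ K) ∈ 𝒴},
    A ⟶ ModuleCat.of Rᵐᵒᵖ (T ⧸ K.1)
  have mem_𝒴 (i : I) : ModuleCat.of Rᵐᵒᵖ (T ⧸ i.1.1) ∈ 𝒴 := i.1.2
  refine ⟨_, _, isPreenvelope_piLift (hprod _ mem_𝒴) (fun i : I ↦ i.2) fun Y hY g ↦ ?_⟩
  obtain ⟨K, f, i, hi, hrange, hif⟩ := exists_factorization_isPureSubmodule_range g.hom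
  have hK : ModuleCat.of Rᵐᵒᵖ (T ⧸ K) ∈ 𝒴 := hpure.mem_of_injective hY i hi hrange
  exact ⟨⟨⟨K, hK⟩, ModuleCat.ofHom f⟩, ModuleCat.ofHom i, ModuleCat.hom_ext hif⟩

end Modules

section RightPerp

theorem closedUnderProducts_rightPerp {𝒜 : Type u} [Category.{v} 𝒜] [Abelian 𝒜]
    [HasProducts.{v} 𝒜] (E : ExactStructure 𝒜) (𝒳 : Set 𝒜) :
    ClosedUnderProducts (E.rightPerp 𝒳) :=
  fun _ _ hY X hX ↦ .pi fun i ↦ hY i X hX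

theorem closedUnderPureSubmodules_rightPerp {R : Type u} [Ring R]
    (E : ExactStructure (ModuleCat.{u} Rᵐᵒᵖ)) {𝒳 : Set (ModuleCat.{u} Rᵐᵒᵖ)}
    (h𝒳 : ∀ X ∈ 𝒳, PureProjective X) : ClosedUnderPureSubmodules (E.rightPerp 𝒳) :=
  fun S hS hS₂ X hX ↦ .of_shortExact hS.1 (h𝒳 X hX S hS) (hS₂ X hX)

theorem rightPerp_preenveloping_of_pureProjective_general {R : Type u} [Ring R]
    (E : ExactStructure (ModuleCat.{u} Rᵐᵒᵖ)) (𝒳 : Set (ModuleCat.{u} Rᵐᵒᵖ))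
    (h𝒳 : ∀ X ∈ 𝒳, PureProjective X) (A : ModuleCat.{u} Rᵐᵒᵖ) :
    ∃ (Y : ModuleCat.{u} Rᵐᵒᵖ) (j : A ⟶ Y), IsPreenvelope (E.rightPerp 𝒳) j :=
  exists_isPreenvelope_of_closedUnderPureSubmodules (closedUnderProducts_rightPerp E 𝒳)
    (closedUnderPureSubmodules_rightPerp E h𝒳) A

end RightPerp

end ExactPaper

open ExactPaper CategoryTheory Limits in
/-- **Theorem 4.4(1), first part**: let `ℰ` be an exact structure on `Mod R` with enough
`ℰ`-projectives and `ℰ`-injectives containing all pure exact sequences. If `𝒳` is a class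
of pure projective right `R`-modules, then `𝒳^⊥` is preenveloping. -/
theorem rightPerp_preenveloping_of_pureProjective
    {R : Type u} [Ring R]
    (E : ExactStructure (ModuleCat.{u} Rᵐᵒᵖ))
    (hproj : E.EnoughProjectives) (hinj : E.EnoughInjectives)
    (hpure : ∀ S : ShortComplex (ModuleCat.{u} Rᵐᵒᵖ), PureSES S → E.conflation S)
    (𝒳 : Set (ModuleCat.{u} Rᵐᵒᵖ)) (h𝒳 : ∀ X ∈ 𝒳, PureProjective X) :
    ∀ A : ModuleCat.{u} Rᵐᵒᵖ, ∃ (Y : ModuleCat.{u} Rᵐᵒᵖ) (j : A ⟶ Y),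
      IsPreenvelope (E.rightPerp 𝒳) j :=
  rightPerp_preenveloping_of_pureProjective_general E 𝒳 h𝒳
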